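/- Let n ≥ 3, let 𝒜 = {[A₁],…,[A_r]} be a malnormal subgroup system of F_n, with L, Γ_i, 𝒞 and F_n − 𝒜 as in the context, and let g ∈ F_n be non-𝒜-peripheral and not a proper power. Then: (1) g^{+∞} ≠ g^{-∞} and the class {g^{+∞}, g^{-∞}} is a point of ∂²(F_n,𝒜); (2) for every w ∈ F_n − 𝒜 and every g' ∈ F_n, only finitely many points of the F_n-orbit of {g^{+∞}, g^{-∞}} lie in g'·C(γ_w); consequently, the counting measure η_g = Σ_{p ∈ F_n·{g^{+∞},g^{-∞}}} δ_p on ∂²(F_n,𝒜) is an F_n-invariant Radon measure, i.e. a relative current on (F_n,𝒜). -/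

import Mathlib

/-!
Right multiplication by `u` changes at most the last `|u|` letters of a reduced word. Hence a
sequence of vertices of the Cayley tree which moves by bounded steps and stays far from `1` keeps a
constant prefix.

Since balls of `F n` are finite and `F n` is torsion-free, `|g ^ k|` tends to infinity, so the
prefixes of `g ^ k` stabilize and `g^{±∞}` exist; every prefix of `g^{+∞}` is moreover close to some
`g ^ k`. If `g^{+∞} = g^{-∞}`, a long common prefix would be close to both `g ^ k` and `g ^ (-j)`
and thus bound `|g ^ (j + k)|`, which is impossible.

If `g^{+∞}` is in the limit set of a conjugate `B` of some `A i`, then by quasiconvexity of `B`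
infinitely many `g ^ k` lie at bounded distance from `B`. By the pigeonhole principle `g ^ k ∈ B`
for some `k ≥ 1`, and malnormality gives `g ∈ B`. So `{g^{+∞}, g^{-∞}}` is not in `∂²𝒜`.

If the endpoints of `h · {g^{+∞}, g^{-∞}}` differ among their first `N` letters, then some vertex
`h * g ^ k` has length less than `N + |g|`. As `g` fixes `{g^{+∞}, g^{-∞}}`, only finitely many
points of the orbit have this property, whereas all points of `g' · C(γ_w)` have it for
`N = 1 + |g'|`. These conditions define open sets which cover `∂²(F_n,𝒜)`, so the orbit is
locally finite; the counting measure of a locally finite subset of a T1 space is regular because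
all subsets of that set are closed.
-/

open scoped Classical
open MeasureTheory

noncomputable section

namespace RelCurr

/-- The alphabet `𝔄 = ℬ ∪ ℬ⁻¹`: a letter is a generator together with a sign. -/
abbrev Letter (n : ℕ) := Fin n × Bool

/-- The inverse of a letter. -/
def linv {n : ℕ} (x : Letter n) : Letter n := (x.1, !x.2)

/-- The free group of rank `n` on the basis `Fin n`. -/
abbrev F (n : ℕ) := FreeGroup (Fin n)

/-- The reduced word of an element of `F n`. -/
def rword {n : ℕ} (g : F n) : List (Letter n) := FreeGroup.toWord g

/-- The length `|g|` of the reduced word of `g`. -/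
def wlen {n : ℕ} (g : F n) : ℕ := (rword g).length

/-- The single-letter element of `F n` given by a letter. -/
def letterE {n : ℕ} (b : Letter n) : F n := FreeGroup.mk [b]

/-- The conjugate subgroup `g A g⁻¹`. -/
def conjSub {n : ℕ} (g : F n) (A : Subgroup (F n)) : Subgroup (F n) :=
  Subgroup.map (MulAut.conj g).toMonoidHom A

/-- A subgroup `A` is malnormal if `xAx⁻¹ ∩ A = {1}` for every `x ∉ A`. -/
def Malnormal {n : ℕ} (A : Subgroup (F n)) : Prop :=
  ∀ x : F n, x ∉ A → conjSub x A ⊓ A = ⊥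

/-- The word metric on the Cayley tree `T`. -/
def dist' {n : ℕ} (x y : F n) : ℕ := wlen (x⁻¹ * y)

/-- The cyclically reduced length of `a`. -/
def cycLen {n : ℕ} (a : F n) : ℕ := sInf { m | ∃ h : F n, wlen (h⁻¹ * a * h) = m }

/-- The vertex set of the minimal `A`-invariant subtree `T_A` of the Cayley tree:
the union of the axes of the nontrivial elements of `A`. -/
def treeVerts {n : ℕ} (A : Subgroup (F n)) : Set (F n) :=
  { h | ∃ a ∈ A, a ≠ 1 ∧ wlen (h⁻¹ * a * h) = cycLen a }

/-- `γ_w ⊆ S`: every prefix of the reduced word of `w` lies in the vertex set `S`. -/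
def pathIn {n : ℕ} (w : F n) (S : Set (F n)) : Prop :=
  ∀ m ≤ wlen w, FreeGroup.mk ((rword w).take m) ∈ S

/-- An element is cyclically reduced if the last letter of its reduced word is not the
inverse of the first letter. -/
def CyclicallyReduced {n : ℕ} (w : F n) : Prop :=
  ∀ x y : Letter n, (rword w).head? = some x → (rword w).getLast? = some y → y ≠ linv x

/-- `v` is a length-one extension of `w`. -/
def LengthOneExt {n : ℕ} (w v : F n) : Prop :=
  ∃ b : Letter n, v = w * letterE b ∧ wlen v = wlen w + 1

/-- `a` is an extension of `w`: the reduced word of `w` is a proper prefix of that of `a`. -/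
def ExtensionOf {n : ℕ} (w a : F n) : Prop :=
  rword w <+: rword a ∧ wlen w < wlen a

/-- `g` is a proper power. -/
def IsProperPower {n : ℕ} (g : F n) : Prop := ∃ (h : F n) (k : ℕ), 2 ≤ k ∧ g = h ^ k

section System

variable {n r : ℕ} (A : Fin r → Subgroup (F n))

/-- `[B] ∈ 𝒜`, i.e. `B` is a conjugate of one of the subgroups of the system. -/
def InSystem (B : Subgroup (F n)) : Prop := ∃ (i : Fin r) (g : F n), B = conjSub g (A i)

/-- The family `A` represents a subgroup system: finite rank subgroups distinct
from `{1}` and `F n`. -/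
def IsSystem : Prop := (∀ i, (A i).FG) ∧ (∀ i, A i ≠ ⊥) ∧ (∀ i, A i ≠ ⊤)

/-- The subgroup system is malnormal. -/
def SystemMalnormal : Prop :=
  (∀ i, Malnormal (A i)) ∧
  ∀ B₁ B₂ : Subgroup (F n), InSystem A B₁ → InSystem A B₂ → B₁ ≠ B₂ → B₁ ⊓ B₂ = ⊥

/-- `g` is `𝒜`-peripheral: trivial or contained in a conjugate of one of the `A i`. -/
def Peripheral (g : F n) : Prop := g = 1 ∨ ∃ B, InSystem A B ∧ g ∈ B

/-- The diameter of the intersection of the trees of two distinct subgroups of the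
system is at most `L`. -/
def DiamBound (L : ℕ) : Prop :=
  ∀ B₁ B₂ : Subgroup (F n), InSystem A B₁ → InSystem A B₂ → B₁ ≠ B₂ →
    ∀ x ∈ treeVerts B₁ ∩ treeVerts B₂, ∀ y ∈ treeVerts B₁ ∩ treeVerts B₂, dist' x y ≤ L

/-- `B ∈ Γ_i`: `B` is a conjugate of `A i` whose tree contains the base point `1`. -/
def GammaMem (i : Fin r) (B : Subgroup (F n)) : Prop :=
  (∃ g : F n, B = conjSub g (A i)) ∧ (1 : F n) ∈ treeVerts B

/-- The finite set `𝒞` of words of length `L+2` whose path is contained in no tree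
`T_B` with `B ∈ Γ_i`, for every `i`. -/
def Ccal (L : ℕ) : Set (F n) :=
  { w | wlen w = L + 2 ∧ ∀ (i : Fin r) (B : Subgroup (F n)), GammaMem A i B →
      ¬ pathIn w (treeVerts B) }

/-- `F_n − 𝒜`: the words containing an element of `𝒞` as a contiguous subword. -/
def FmA (L : ℕ) : Set (F n) := { w | ∃ x ∈ Ccal A L, rword x <:+: rword w }

/-- `S_k`: words of length `k` not containing any element of `𝒞` as a subword. -/
def Sk (L k : ℕ) : Set (F n) := { w | wlen w = k ∧ w ∉ FmA A L }

end System

/-! ### The boundary of `F n` -/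

/-- An infinite reduced word. -/
def IsRed {n : ℕ} (ξ : ℕ → Letter n) : Prop := ∀ i, ξ (i + 1) ≠ linv (ξ i)

/-- The Gromov boundary `∂F_n`, realized as the space of infinite reduced words,
topologized as a subspace of the product space. -/
def Boundary (n : ℕ) : Type := { ξ : ℕ → Letter n // IsRed ξ }

instance {n : ℕ} : TopologicalSpace (Boundary n) :=
  instTopologicalSpaceSubtype

/-- The length-`m` prefix of a boundary point. -/
def bpre {n : ℕ} (ξ : Boundary n) (m : ℕ) : List (Letter n) :=
  (List.range m).map ξ.1

/-- The reduced word of `w` is a prefix of the infinite word `ξ`. -/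
def wordPrefixOf {n : ℕ} (w : F n) (ξ : Boundary n) : Prop :=
  bpre ξ (wlen w) = rword w

/-- The boundary (limit set) `∂A ⊆ ∂F_n` of a subgroup `A`. -/
def limitSet {n : ℕ} (A : Subgroup (F n)) : Set (Boundary n) :=
  { ξ | ∀ m : ℕ, ∃ a ∈ A, bpre ξ m <+: rword a }

/-- `ξ = g^{+∞}`: `ξ` is the limit of the reduced words of the powers of `g`. -/
def IsPosLimit {n : ℕ} (g : F n) (ξ : Boundary n) : Prop :=
  ∀ m : ℕ, ∃ N : ℕ, ∀ k ≥ N, bpre ξ m <+: rword (g ^ k)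

/-- The number of letters cancelled when concatenating the word `l` with the
infinite reduced word `ξ`. -/
def cancelLen {n : ℕ} (l : List (Letter n)) (ξ : ℕ → Letter n) : ℕ :=
  sSup { j | j ≤ l.length ∧ ∀ i < j, l.reverse[i]? = some (linv (ξ i)) }

/-- The sequence underlying the action of `g` on a boundary point: left multiplication
followed by cancellation. -/
def actSeq {n : ℕ} (g : F n) (ξ : ℕ → Letter n) : ℕ → Letter n :=
  fun m =>
    if h : m < (rword g).length - cancelLen (rword g) ξ then
      (rword g).get ⟨m, by omega⟩
    else ξ (m - ((rword g).length - cancelLen (rword g) ξ) + cancelLen (rword g) ξ)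

/-- The action of `F n` on its boundary: left multiplication followed by cancellation.
(The sequence `actSeq g ξ.1` is always reduced, so the first branch always applies.) -/
def bAct {n : ℕ} (g : F n) (ξ : Boundary n) : Boundary n :=
  if h : IsRed (actSeq g ξ.1) then ⟨actSeq g ξ.1, h⟩ else ξ

/-! ### The double boundary -/

/-- The diagonal action of `F n` on `Sym2 (∂F_n)`, whose restriction to the set of
non-diagonal classes is the action on the double boundary `∂²F_n`. -/
def dbAct {n : ℕ} (g : F n) : Sym2 (Boundary n) → Sym2 (Boundary n) := Sym2.map (bAct g)

/-- `∂²𝒜`: the classes `{ξ,η}` with both endpoints in `g·∂A_i = ∂(gA_ig⁻¹)` for some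
`i` and `g`. -/
def dblBndA {n r : ℕ} (A : Fin r → Subgroup (F n)) : Set (Sym2 (Boundary n)) :=
  { z | ∃ (i : Fin r) (g : F n) (ξ η : Boundary n), z = s(ξ, η) ∧
      ξ ∈ limitSet (conjSub g (A i)) ∧ η ∈ limitSet (conjSub g (A i)) }

/-- The double boundary `∂²(F_n,𝒜)` of `F n` relative to `𝒜`, as a subset of
`Sym2 (∂F_n)`: non-diagonal classes not lying in `∂²𝒜`. -/
def relSet {n r : ℕ} (A : Fin r → Subgroup (F n)) : Set (Sym2 (Boundary n)) :=
  { z | ¬ z.IsDiag } \ dblBndA A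

/-- The cylinder set `C(γ_w) ⊆ ∂²F_n` of the geodesic path from `1` to `w`. -/
def cylinder {n : ℕ} (w : F n) : Set (Sym2 (Boundary n)) :=
  { z | ∃ ξ η : Boundary n, z = s(ξ, η) ∧ ξ.1 0 ≠ η.1 0 ∧
      (wordPrefixOf w ξ ∨ wordPrefixOf w η) }

instance {n : ℕ} : MeasurableSpace (Sym2 (Boundary n)) := borel _

/-- The action of `g ∈ F n` on `∂²(F_n,𝒜)`. (The action of `F n` preserves
`∂²(F_n,𝒜)`, so the first branch always applies.) -/
def relAct {n r : ℕ} (A : Fin r → Subgroup (F n)) (g : F n) (z : ↥(relSet A)) :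
    ↥(relSet A) :=
  if h : dbAct g z.1 ∈ relSet A then ⟨dbAct g z.1, h⟩ else z

/-- The cylinder `C(γ_w)` as a subset of `∂²(F_n,𝒜)`. -/
def relCyl {n r : ℕ} (A : Fin r → Subgroup (F n)) (w : F n) : Set ↥(relSet A) :=
  Subtype.val ⁻¹' cylinder w

/-- The translated cylinder `g·C(γ_w)` as a subset of `∂²(F_n,𝒜)`. -/
def relCylG {n r : ℕ} (A : Fin r → Subgroup (F n)) (g w : F n) : Set ↥(relSet A) :=
  Subtype.val ⁻¹' (dbAct g '' cylinder w)

/-- A relative current on `(F_n,𝒜)`: an `F_n`-invariant Radon measure on the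
locally compact space `∂²(F_n,𝒜)` (finite on compacts, outer regular, inner regular
on open sets). -/
def IsRelCurrent {n r : ℕ} (A : Fin r → Subgroup (F n)) (μ : Measure ↥(relSet A)) : Prop :=
  (∀ (g : F n) (s : Set ↥(relSet A)), MeasurableSet s → μ (relAct A g ⁻¹' s) = μ s) ∧
  μ.Regular

/-- The `F_n`-orbit of a point of `Sym2 (∂F_n)`, inside `∂²(F_n,𝒜)`. -/
def orbitOf {n r : ℕ} (A : Fin r → Subgroup (F n)) (z : Sym2 (Boundary n)) :
    Set ↥(relSet A) :=
  { y | ∃ h : F n, (y : Sym2 (Boundary n)) = dbAct h z }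

open Filter Topology

/-! ### Reduced words -/

section FreeGroup

variable {α : Type*} [DecidableEq α]

theorem toWord_mk_of_isReduced {l : List (α × Bool)} (hl : FreeGroup.IsReduced l) :
    (FreeGroup.mk l).toWord = l := by
  rw [FreeGroup.toWord_mk, hl.reduce_eq]

theorem drop_toWord_suffix_toWord_mk_mul (l : List (α × Bool)) (x : FreeGroup α) :
    x.toWord.drop l.length <:+ (FreeGroup.mk l * x).toWord := by
  induction l with
  | nil => rw [← FreeGroup.one_eq_mk, one_mul, List.length_nil, List.drop_zero]
  | cons b l ih =>
    have hcons : (FreeGroup.mk (b :: l) * x).toWord =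
        FreeGroup.reduce (b :: (FreeGroup.mk l * x).toWord) := by
      rw [← List.singleton_append, ← FreeGroup.mul_mk, mul_assoc, FreeGroup.toWord_mul,
        FreeGroup.toWord_mk, FreeGroup.reduce_singleton, List.singleton_append]
    rw [hcons, FreeGroup.reduce.cons, FreeGroup.reduce_toWord, List.length_cons]
    have hdrop : x.toWord.drop (l.length + 1) <:+ x.toWord.drop l.length :=
      List.drop_suffix_drop_left _ (Nat.le_succ _)
    cases hword : (FreeGroup.mk l * x).toWord with
    | nil =>
      rw [hword] at ih
      exact (hdrop.trans ih).trans (List.nil_suffix)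
    | cons c t =>
      rw [hword] at ih
      change x.toWord.drop (l.length + 1) <:+ if b.1 = c.1 ∧ b.2 = !c.2 then t else b :: c :: t
      split_ifs
      · obtain heq | hsuffix := List.suffix_cons_iff.1 ih
        · rw [← List.drop_drop, heq, List.drop_one, List.tail_cons]
        · exact hdrop.trans hsuffix
      · exact (hdrop.trans ih).trans (List.suffix_cons _ _)

theorem drop_toWord_suffix_toWord_mul (u x : FreeGroup α) :
    x.toWord.drop u.norm <:+ (u * x).toWord := by
  simpa only [FreeGroup.norm, FreeGroup.mk_toWord] using drop_toWord_suffix_toWord_mk_mul u.toWord x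

theorem invRev_suffix_invRev {β : Type*} {v w : List (β × Bool)} :
    FreeGroup.invRev v <:+ FreeGroup.invRev w ↔ v <+: w := by
  constructor
  · rintro ⟨t, ht⟩
    refine ⟨FreeGroup.invRev t, ?_⟩
    rw [← FreeGroup.invRev_invRev (L₁ := w), ← ht, FreeGroup.invRev_append,
      FreeGroup.invRev_invRev]
  · rintro ⟨t, rfl⟩
    exact ⟨FreeGroup.invRev t, FreeGroup.invRev_append.symm⟩

theorem prefix_toWord_mul {v : List (α × Bool)} {x u : FreeGroup α} (hv : v <+: x.toWord)
    (hlen : v.length + u.norm ≤ x.norm) : v <+: (x * u).toWord := by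
  rw [← invRev_suffix_invRev, ← FreeGroup.toWord_inv] at hv ⊢
  rw [mul_inv_rev]
  have hdrop := drop_toWord_suffix_toWord_mul u⁻¹ x⁻¹
  refine (List.suffix_of_suffix_length_le hv (List.drop_suffix _ _) ?_).trans hdrop
  rw [List.length_drop, FreeGroup.invRev_length, FreeGroup.norm_inv_eq]
  have : x⁻¹.toWord.length = x.norm := FreeGroup.norm_inv_eq
  omega

theorem take_toWord_mul {N : ℕ} {x u : FreeGroup α} (h : N + u.norm ≤ x.norm) :
    (x * u).toWord.take N = x.toWord.take N := by
  have hlen : (x.toWord.take N).length = N :=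
    List.length_take_of_le ((Nat.le_add_right _ _).trans h)
  have hpre := prefix_toWord_mul (u := u) (List.take_prefix N x.toWord) (by rwa [hlen])
  rw [List.prefix_iff_eq_take, hlen] at hpre
  exact hpre.symm

theorem take_toWord_eq_of_norm_step_le {x : ℕ → FreeGroup α} {N R : ℕ}
    (hstep : ∀ k, ((x k)⁻¹ * x (k + 1)).norm ≤ R) {k₀ : ℕ}
    (hfar : ∀ k ≥ k₀, N + R ≤ (x k).norm) {k : ℕ} (hk : k₀ ≤ k) :
    (x k).toWord.take N = (x k₀).toWord.take N := by
  induction k, hk using Nat.le_induction with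
  | base => rfl
  | succ k hk ih =>
    rw [← ih, ← take_toWord_mul ((Nat.add_le_add_left (hstep k) N).trans (hfar k hk)),
      mul_inv_cancel_left]

theorem toWord_mul_mk_prefix_toWord_mul {v : List (α × Bool)} {h x : FreeGroup α}
    (hv : v <+: x.toWord) (hlen : h.norm < v.length) :
    (h * FreeGroup.mk v).toWord <+: (h * x).toWord := by
  obtain ⟨t, ht⟩ := hv
  have hvt : FreeGroup.IsReduced (v ++ t) := ht ▸ FreeGroup.isReduced_toWord
  have hvred : (FreeGroup.mk v).toWord = v :=
    toWord_mk_of_isReduced (hvt.infix (List.prefix_append v t).isInfix)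
  obtain ⟨p, hp⟩ := drop_toWord_suffix_toWord_mul h (FreeGroup.mk v)
  rw [hvred] at hp
  have hred : FreeGroup.IsReduced (p ++ v.drop h.norm ++ t) := by
    refine FreeGroup.IsReduced.append_overlap (hp ▸ FreeGroup.isReduced_toWord)
      (hvt.infix ?_) (List.drop_eq_nil_iff.not.2 (by omega))
    rw [← List.drop_append_of_le_length hlen.le]
    exact (List.drop_suffix _ _).isInfix
  refine ⟨t, ?_⟩
  rw [← hp, ← toWord_mk_of_isReduced hred, hp, ← FreeGroup.mul_mk, FreeGroup.mk_toWord, mul_assoc,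
    FreeGroup.mul_mk, ht, FreeGroup.mk_toWord]

theorem norm_pow_le (x : FreeGroup α) (k : ℕ) : (x ^ k).norm ≤ k * x.norm := by
  induction k with
  | zero => simp
  | succ k ih =>
    rw [pow_succ, Nat.succ_mul]
    exact (FreeGroup.norm_mul_le _ _).trans (Nat.add_le_add_right ih _)

theorem norm_inv_mul_le_add {R S : ℕ} {x y v : FreeGroup α} (hx : (x⁻¹ * v).norm ≤ R)
    (hy : (y⁻¹ * v).norm ≤ S) : (x⁻¹ * y).norm ≤ R + S := by
  have hxy : x⁻¹ * y = x⁻¹ * v * (y⁻¹ * v)⁻¹ := by group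
  rw [hxy]
  refine (FreeGroup.norm_mul_le _ _).trans (add_le_add hx ?_)
  rwa [FreeGroup.norm_inv_eq]

/-- The partial products of a word in the generators form a path from `1` to `a` with steps of
length at most `R`, and in a tree such a path passes `R`-close to every vertex of the geodesic. -/
theorem exists_norm_inv_mul_mk_le_of_mem_closure {S : Set (FreeGroup α)} {R : ℕ}
    (hS : ∀ s ∈ S, s.norm ≤ R) {a : FreeGroup α} (ha : a ∈ Submonoid.closure S)
    {v : List (α × Bool)} (hv : v <+: a.toWord) :
    ∃ b ∈ Submonoid.closure S, (b⁻¹ * FreeGroup.mk v).norm ≤ R := by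
  induction ha using Submonoid.closure_induction_right with
  | one =>
    obtain rfl : v = [] := by simpa only [FreeGroup.toWord_one, List.prefix_nil] using hv
    exact ⟨1, one_mem _, by simp [← FreeGroup.one_eq_mk]⟩
  | mul_right a ha s hs ih =>
    by_cases hlong : v.length + s.norm ≤ (a * s).norm
    · apply ih
      simpa only [mul_inv_cancel_right] using
        prefix_toWord_mul (u := s⁻¹) hv (by rwa [FreeGroup.norm_inv_eq])
    · refine ⟨a * s, mul_mem ha (Submonoid.subset_closure hs), ?_⟩
      obtain ⟨t, ht⟩ := hv
      have hlen : v.length + t.length = (a * s).norm := by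
        rw [FreeGroup.norm, ← ht, List.length_append]
      have hmul : (a * s)⁻¹ * FreeGroup.mk v = (FreeGroup.mk t)⁻¹ := by
        rw [← FreeGroup.mk_toWord (x := a * s), ← ht, ← FreeGroup.mul_mk]
        group
      rw [hmul, FreeGroup.norm_inv_eq]
      have ht_norm : (FreeGroup.mk t).norm ≤ t.length := FreeGroup.norm_mk_le
      have hs_norm := hS s hs
      omega

theorem finite_setOf_norm_le [Finite α] (R : ℕ) : {x : FreeGroup α | x.norm ≤ R}.Finite :=
  (List.finite_length_le (α × Bool) R).preimage FreeGroup.toWord_injective.injOn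

theorem tendsto_norm_pow [Finite α] {g : FreeGroup α} (hg : g ≠ 1) :
    Tendsto (fun k : ℕ => (g ^ k).norm) atTop atTop := by
  have hnorm : Tendsto (FreeGroup.norm (α := α)) cofinite atTop :=
    tendsto_atTop.2 fun R => by
      filter_upwards [(finite_setOf_norm_le R).compl_mem_cofinite] with x hx
      exact le_of_not_ge hx
  have hpow : Function.Injective fun k : ℕ => g ^ k :=
    injective_pow_iff_not_isOfFinOrder.2 fun h => hg ((isOfFinOrder_iff_eq_one g).1 h)
  exact hnorm.comp (Nat.cofinite_eq_atTop ▸ hpow.tendsto_cofinite)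

end FreeGroup

theorem exists_pow_mem_of_infinite {G : Type*} [Group G] {B : Subgroup G} {g : G} {T : Set G}
    (hT : T.Finite) (hinf : {k : ℕ | ∃ x ∈ T, g ^ k * x⁻¹ ∈ B}.Infinite) :
    ∃ k ≠ 0, g ^ k ∈ B := by
  have hunion : {k : ℕ | ∃ x ∈ T, g ^ k * x⁻¹ ∈ B} = ⋃ x ∈ T, {k | g ^ k * x⁻¹ ∈ B} := by
    ext k
    simp
  obtain ⟨x, -, hx⟩ : ∃ x ∈ T, {k : ℕ | g ^ k * x⁻¹ ∈ B}.Infinite := by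
    by_contra! hfin
    exact hinf (hunion ▸ hT.biUnion fun x hx => hfin x hx)
  obtain ⟨k, hk⟩ := hx.nonempty
  obtain ⟨l, hl, hkl⟩ := hx.exists_gt k
  refine ⟨l - k, by omega, ?_⟩
  have hmul : g ^ (l - k) = g ^ l * x⁻¹ * (g ^ k * x⁻¹)⁻¹ := by
    rw [pow_sub _ hkl.le]
    group
  exact hmul ▸ mul_mem hl (inv_mem hk)

/-! ### Convergence to the boundary and the boundary action -/

section Boundary

variable {n : ℕ}

theorem ne_linv_iff {a b : Letter n} : b ≠ linv a ↔ (a.1 = b.1 → a.2 = b.2) := by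
  rw [Ne, linv, Prod.ext_iff, not_and, Bool.not_eq_not, eq_comm (a := b.1), eq_comm (a := b.2)]

theorem isRed_iff_forall_isReduced {ξ : ℕ → Letter n} :
    IsRed ξ ↔ ∀ m, FreeGroup.IsReduced ((List.range m).map ξ) := by
  simp only [FreeGroup.IsReduced, List.isChain_map, List.isChain_range, ← ne_linv_iff]
  exact ⟨fun h m i _ => h i, fun h i => h (i + 2) i (by omega)⟩

theorem isReduced_bpre (ξ : Boundary n) (m : ℕ) : FreeGroup.IsReduced (bpre ξ m) :=
  isRed_iff_forall_isReduced.1 ξ.2 m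

@[simp]
theorem length_bpre (ξ : Boundary n) (m : ℕ) : (bpre ξ m).length = m := by
  rw [bpre, List.length_map, List.length_range]

theorem bpre_eq_bpre_iff {ξ η : Boundary n} {m : ℕ} :
    bpre ξ m = bpre η m ↔ ∀ i < m, ξ.1 i = η.1 i := by
  simp only [bpre, List.map_inj_left, List.mem_range]

theorem eq_of_forall_bpre_eq {ξ η : Boundary n} (h : ∀ m, bpre ξ m = bpre η m) : ξ = η :=
  Subtype.ext (funext fun i => bpre_eq_bpre_iff.1 (h (i + 1)) i (Nat.lt_succ_self i))

theorem bpre_prefix_bpre (ξ : Boundary n) {m k : ℕ} (hmk : m ≤ k) : bpre ξ m <+: bpre ξ k := by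
  rw [List.prefix_iff_eq_take, length_bpre, bpre, bpre, ← List.map_take, List.take_range,
    min_eq_left hmk]

theorem toWord_mk_bpre (ξ : Boundary n) (m : ℕ) : (FreeGroup.mk (bpre ξ m)).toWord = bpre ξ m :=
  toWord_mk_of_isReduced (isReduced_bpre ξ m)

/-- Convergence of vertices of the Cayley tree to a boundary point. -/
def TendstoBoundary {ι : Type*} (x : ι → F n) (l : Filter ι) (ξ : Boundary n) : Prop :=
  ∀ m, ∀ᶠ k in l, bpre ξ m <+: (x k).toWord

theorem isPosLimit_iff_tendstoBoundary {g : F n} {ξ : Boundary n} :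
    IsPosLimit g ξ ↔ TendstoBoundary (fun k : ℕ => g ^ k) atTop ξ :=
  forall_congr' fun _ => eventually_atTop.symm

theorem tendstoBoundary_mk_bpre (ξ : Boundary n) :
    TendstoBoundary (fun m => FreeGroup.mk (bpre ξ m)) atTop ξ := fun m => by
  filter_upwards [eventually_ge_atTop m] with k hk
  rw [toWord_mk_bpre]
  exact bpre_prefix_bpre ξ hk

theorem exists_tendstoBoundary {x : ℕ → F n} {R : ℕ}
    (hstep : ∀ k, ((x k)⁻¹ * x (k + 1)).norm ≤ R)
    (hx : Tendsto (fun k => (x k).norm) atTop atTop) : ∃ ξ, TendstoBoundary x atTop ξ := by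
  have hletter : ∀ i, ∃ b, ∀ᶠ k in atTop, (x k).toWord[i]? = some b := fun i => by
    obtain ⟨k₀, hk₀⟩ := eventually_atTop.1 (hx.eventually_ge_atTop (i + 1 + R))
    have hi : i < (x k₀).toWord.length := Nat.lt_of_lt_of_le (by omega) (hk₀ k₀ le_rfl)
    refine ⟨(x k₀).toWord[i], ?_⟩
    filter_upwards [eventually_ge_atTop k₀] with k hk
    have htake := take_toWord_eq_of_norm_step_le hstep hk₀ hk
    rw [← List.getElem?_take_of_lt (Nat.lt_succ_self i), htake,
      List.getElem?_take_of_lt (Nat.lt_succ_self i), List.getElem?_eq_getElem hi]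
  choose ξ hξ using hletter
  have hpre : ∀ m, ∀ᶠ k in atTop, (List.range m).map ξ <+: (x k).toWord := fun m => by
    filter_upwards [(eventually_all_finset (Finset.range m)).2 fun i _ => hξ i] with k hk
    rw [List.prefix_iff_getElem?]
    intro i hi
    rw [List.length_map, List.length_range] at hi
    rw [hk i (Finset.mem_range.2 hi), List.getElem_map, List.getElem_range]
  have hred : IsRed ξ := isRed_iff_forall_isReduced.2 fun m =>
    have ⟨_, hk⟩ := (hpre m).exists
    FreeGroup.isReduced_toWord.infix hk.isInfix
  exact ⟨⟨ξ, hred⟩, hpre⟩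

theorem exists_isPosLimit {g : F n} (hg : g ≠ 1) : ∃ ξ, IsPosLimit g ξ := by
  simp only [isPosLimit_iff_tendstoBoundary]
  refine exists_tendstoBoundary (R := g.norm) (fun k => ?_) (tendsto_norm_pow hg)
  rw [pow_succ, inv_mul_cancel_left]

namespace TendstoBoundary

variable {ι : Type*} {l : Filter ι} {x : ι → F n} {ξ η : Boundary n}

theorem unique [l.NeBot] (hξ : TendstoBoundary x l ξ) (hη : TendstoBoundary x l η) : ξ = η :=
  eq_of_forall_bpre_eq fun m =>
    have ⟨_, hkξ, hkη⟩ := ((hξ m).and (hη m)).exists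
    (List.prefix_of_prefix_length_le hkξ hkη (by simp)).eq_of_length (by simp)

theorem mul_right (hx : TendstoBoundary x l ξ) (u : F n) :
    TendstoBoundary (fun k => x k * u) l ξ := fun m => by
  filter_upwards [hx (m + u.norm)] with k hk
  refine prefix_toWord_mul ((bpre_prefix_bpre ξ (Nat.le_add_right _ _)).trans hk) ?_
  simpa only [length_bpre, FreeGroup.norm] using hk.length_le

theorem bpre_eq_take {x : ℕ → F n} (hx : TendstoBoundary x atTop ξ) {N R : ℕ}
    (hstep : ∀ k, ((x k)⁻¹ * x (k + 1)).norm ≤ R) (hfar : ∀ k, N + R ≤ (x k).norm) :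
    bpre ξ N = (x 0).toWord.take N := by
  obtain ⟨k, hk⟩ := (hx N).exists
  rw [List.prefix_iff_eq_take, length_bpre] at hk
  rw [hk]
  exact take_toWord_eq_of_norm_step_le hstep (fun k _ => hfar k) (Nat.zero_le k)

end TendstoBoundary

/-- The boundary point obtained by deleting the first `c` letters. -/
def Boundary.drop (ξ : Boundary n) (c : ℕ) : Boundary n :=
  ⟨fun i => ξ.1 (c + i), fun i => ξ.2 (c + i)⟩

theorem bpre_add (ξ : Boundary n) (c k : ℕ) : bpre ξ (c + k) = bpre ξ c ++ bpre (ξ.drop c) k := by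
  simp only [bpre, List.range_add, List.map_append, List.map_map]
  rfl

theorem invRev_bpre_suffix_iff {l : List (Letter n)} {ξ : Boundary n} {j : ℕ} :
    FreeGroup.invRev (bpre ξ j) <:+ l ↔ ∀ i < j, l.reverse[i]? = some (linv (ξ.1 i)) := by
  rw [← List.reverse_prefix, FreeGroup.invRev, List.reverse_reverse, List.prefix_iff_getElem?]
  simp only [bpre, List.length_map, List.length_range, List.getElem_map, List.getElem_range]
  rfl

theorem le_cancelLen_iff {l : List (Letter n)} {ξ : Boundary n} {j : ℕ} :
    j ≤ cancelLen l ξ.1 ↔ FreeGroup.invRev (bpre ξ j) <:+ l := by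
  have hbdd : BddAbove {j | j ≤ l.length ∧ ∀ i < j, l.reverse[i]? = some (linv (ξ.1 i))} :=
    ⟨l.length, fun j hj => hj.1⟩
  have hne : {j | j ≤ l.length ∧ ∀ i < j, l.reverse[i]? = some (linv (ξ.1 i))}.Nonempty :=
    ⟨0, Nat.zero_le _, fun i hi => absurd hi (Nat.not_lt_zero i)⟩
  constructor
  · intro hj
    refine (invRev_suffix_invRev.2 (bpre_prefix_bpre ξ hj)).trans (invRev_bpre_suffix_iff.2 ?_)
    exact (Nat.sSup_mem hne hbdd).2
  · intro hj
    refine le_csSup hbdd ⟨?_, invRev_bpre_suffix_iff.1 hj⟩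
    simpa only [FreeGroup.invRev_length, length_bpre] using hj.length_le

theorem exists_toWord_eq_append_invRev_bpre (h : F n) (ξ : Boundary n) :
    ∃ p : List (Letter n), h.toWord = p ++ FreeGroup.invRev (bpre ξ (cancelLen h.toWord ξ.1)) :=
  have ⟨p, hp⟩ := le_cancelLen_iff.1 (le_refl (cancelLen h.toWord ξ.1))
  ⟨p, hp.symm⟩

theorem norm_sub_cancelLen {h : F n} {ξ : Boundary n} {p : List (Letter n)}
    (hp : h.toWord = p ++ FreeGroup.invRev (bpre ξ (cancelLen h.toWord ξ.1))) :
    h.norm - cancelLen h.toWord ξ.1 = p.length := by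
  have hlen := congrArg List.length hp
  rw [List.length_append, FreeGroup.invRev_length, length_bpre] at hlen
  exact Nat.sub_eq_of_eq_add hlen

theorem isReduced_append_bpre_drop {h : F n} {ξ : Boundary n} {p : List (Letter n)}
    (hp : h.toWord = p ++ FreeGroup.invRev (bpre ξ (cancelLen h.toWord ξ.1))) (k : ℕ) :
    FreeGroup.IsReduced (p ++ bpre (ξ.drop (cancelLen h.toWord ξ.1)) k) := by
  set c := cancelLen h.toWord ξ.1
  have hpred : FreeGroup.IsReduced p :=
    FreeGroup.isReduced_toWord.infix (hp ▸ (List.prefix_append _ _).isInfix)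
  refine List.isChain_append.2 ⟨hpred, isReduced_bpre _ k, fun a ha b hb => ?_⟩
  obtain rfl : ξ.1 c = b := by
    rw [bpre, Option.mem_def, List.head?_map, Option.map_eq_some_iff] at hb
    obtain ⟨i, hi, rfl⟩ := hb
    rw [List.head?_range, Option.ite_none_left_eq_some, Option.some_inj] at hi
    rw [← hi.2]
    rfl
  rw [← ne_linv_iff]
  intro hcancel
  obtain ⟨q, rfl⟩ := List.getLast?_eq_some_iff.1 ha
  have hsuffix : FreeGroup.invRev (bpre ξ (c + 1)) <:+ h.toWord := by
    refine ⟨q, ?_⟩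
    have hletter : FreeGroup.invRev (bpre (ξ.drop c) 1) = [a] := by
      change [linv (ξ.1 c)] = [a]
      rw [hcancel, linv, linv, Bool.not_not]
    rw [bpre_add, FreeGroup.invRev_append, hletter, hp, List.append_assoc]
  exact Nat.not_succ_le_self c (le_cancelLen_iff.2 hsuffix)

theorem map_range_actSeq {h : F n} {ξ : Boundary n} {p : List (Letter n)}
    (hp : h.toWord = p ++ FreeGroup.invRev (bpre ξ (cancelLen h.toWord ξ.1))) (k : ℕ) :
    (List.range (p.length + k)).map (actSeq h ξ.1) =
      p ++ bpre (ξ.drop (cancelLen h.toWord ξ.1)) k := by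
  have hlen : (rword h).length - cancelLen (rword h) ξ.1 = p.length := norm_sub_cancelLen hp
  rw [List.range_add, List.map_append]
  congr 1
  · refine List.ext_getElem (by simp) fun i hi hip => ?_
    rw [List.getElem_map, List.getElem_range, actSeq, dif_pos (hlen.symm ▸ hip)]
    exact (List.getElem_of_eq hp _).trans (List.getElem_append_left hip)
  · rw [bpre, List.map_map]
    refine List.map_congr_left fun i _ => ?_
    rw [Function.comp_apply, actSeq, dif_neg (by omega), hlen, Nat.add_sub_cancel_left, add_comm]
    rfl

theorem isRed_actSeq (h : F n) (ξ : Boundary n) : IsRed (actSeq h ξ.1) := by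
  obtain ⟨p, hp⟩ := exists_toWord_eq_append_invRev_bpre h ξ
  refine isRed_iff_forall_isReduced.2 fun m => ?_
  have hred := isReduced_append_bpre_drop hp m
  rw [← map_range_actSeq hp, Nat.add_comm, List.range_add, List.map_append] at hred
  exact hred.infix (List.prefix_append _ _).isInfix

theorem coe_bAct (h : F n) (ξ : Boundary n) : (bAct h ξ).1 = actSeq h ξ.1 :=
  congrArg Subtype.val (dif_pos (isRed_actSeq h ξ))

theorem toWord_mul_mk_bpre (h : F n) (ξ : Boundary n) (k : ℕ) :
    (h * FreeGroup.mk (bpre ξ (cancelLen h.toWord ξ.1 + k))).toWord =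
      bpre (bAct h ξ) (h.norm - cancelLen h.toWord ξ.1 + k) := by
  obtain ⟨p, hp⟩ := exists_toWord_eq_append_invRev_bpre h ξ
  have hmul : h * FreeGroup.mk (bpre ξ (cancelLen h.toWord ξ.1 + k)) =
      FreeGroup.mk (p ++ bpre (ξ.drop (cancelLen h.toWord ξ.1)) k) := by
    nth_rewrite 1 [← FreeGroup.mk_toWord (x := h), hp]
    rw [bpre_add, ← FreeGroup.mul_mk, ← FreeGroup.mul_mk, ← FreeGroup.mul_mk, ← FreeGroup.inv_mk]
    group
  rw [hmul, toWord_mk_of_isReduced (isReduced_append_bpre_drop hp k), norm_sub_cancelLen hp,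
    ← map_range_actSeq hp, ← coe_bAct, bpre]

theorem bpre_bAct_prefix_toWord_mul (h : F n) (ξ : Boundary n) {m k : ℕ} (hmk : m + h.norm ≤ k) :
    bpre (bAct h ξ) m <+: (h * FreeGroup.mk (bpre ξ k)).toWord := by
  have hc : cancelLen h.toWord ξ.1 ≤ h.norm := by
    simpa only [FreeGroup.invRev_length, length_bpre, FreeGroup.norm] using
      (le_cancelLen_iff.1 (le_refl (cancelLen h.toWord ξ.1))).length_le
  obtain ⟨j, rfl⟩ := Nat.exists_eq_add_of_le (hc.trans ((Nat.le_add_left _ _).trans hmk))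
  rw [toWord_mul_mk_bpre]
  exact bpre_prefix_bpre _ (by omega)

theorem bpre_bAct_eq_of_bpre_eq {h : F n} {ξ η : Boundary n} {m : ℕ}
    (heq : bpre ξ (m + h.norm) = bpre η (m + h.norm)) : bpre (bAct h ξ) m = bpre (bAct h η) m :=
  (List.prefix_of_prefix_length_le (bpre_bAct_prefix_toWord_mul h ξ le_rfl)
    (heq ▸ bpre_bAct_prefix_toWord_mul h η le_rfl) (by simp)).eq_of_length (by simp)

theorem TendstoBoundary.mul_left {ι : Type*} {l : Filter ι} {x : ι → F n} {ξ : Boundary n}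
    (hx : TendstoBoundary x l ξ) (h : F n) :
    TendstoBoundary (fun k => h * x k) l (bAct h ξ) := fun m => by
  filter_upwards [hx (m + h.norm + 1)] with k hk
  refine (bpre_bAct_prefix_toWord_mul h ξ (Nat.le_succ _)).trans
    (toWord_mul_mk_prefix_toWord_mul hk ?_)
  rw [length_bpre]
  omega

theorem bAct_mul (g h : F n) (ξ : Boundary n) : bAct (g * h) ξ = bAct g (bAct h ξ) := by
  have hgh := (tendstoBoundary_mk_bpre ξ).mul_left (g * h)
  simp only [mul_assoc] at hgh
  exact hgh.unique (((tendstoBoundary_mk_bpre ξ).mul_left h).mul_left g)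

theorem bAct_one (ξ : Boundary n) : bAct 1 ξ = ξ := by
  have hone := (tendstoBoundary_mk_bpre ξ).mul_left 1
  simp only [one_mul] at hone
  exact hone.unique (tendstoBoundary_mk_bpre ξ)

end Boundary

/-! ### The action on the relative double boundary -/

section Action

variable {n : ℕ}

theorem mem_conjSub {h x : F n} {B : Subgroup (F n)} : x ∈ conjSub h B ↔ h⁻¹ * x * h ∈ B :=
  Subgroup.mem_map_equiv

theorem conjSub_conjSub (g h : F n) (B : Subgroup (F n)) :
    conjSub g (conjSub h B) = conjSub (g * h) B := by
  ext x
  simp only [mem_conjSub, mul_inv_rev, mul_assoc]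

theorem fg_conjSub {B : Subgroup (F n)} (hB : B.FG) (h : F n) : (conjSub h B).FG :=
  (Subgroup.fg_iff_submonoid_fg _).2 (((Subgroup.fg_iff_submonoid_fg B).1 hB).map _)

theorem dbAct_mul (g h : F n) (z : Sym2 (Boundary n)) : dbAct (g * h) z = dbAct g (dbAct h z) := by
  rw [dbAct, dbAct, dbAct, Sym2.map_map]
  exact Sym2.map_congr fun ξ _ => bAct_mul g h ξ

theorem dbAct_one (z : Sym2 (Boundary n)) : dbAct 1 z = z :=
  (Sym2.map_congr fun ξ _ => bAct_one ξ).trans (congrFun Sym2.map_id z)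

theorem dbAct_inv_dbAct (h : F n) (z : Sym2 (Boundary n)) : dbAct h⁻¹ (dbAct h z) = z := by
  rw [← dbAct_mul, inv_mul_cancel, dbAct_one]

theorem bAct_injective (h : F n) : Function.Injective (bAct h) :=
  Function.LeftInverse.injective (g := bAct h⁻¹) fun ξ => by
    rw [← bAct_mul, inv_mul_cancel, bAct_one]

theorem mem_limitSet_iff {B : Subgroup (F n)} {ξ : Boundary n} :
    ξ ∈ limitSet B ↔ ∃ x : ℕ → F n, (∀ m, x m ∈ B) ∧ TendstoBoundary x atTop ξ := by
  constructor
  · intro hξ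
    choose x hxB hx using hξ
    refine ⟨x, hxB, fun m => ?_⟩
    filter_upwards [eventually_ge_atTop m] with k hk
    exact (bpre_prefix_bpre ξ hk).trans (hx k)
  · rintro ⟨x, hxB, hx⟩ m
    obtain ⟨k, hk⟩ := (hx m).exists
    exact ⟨x k, hxB k, hk⟩

theorem bAct_mem_limitSet_conjSub {B : Subgroup (F n)} {ξ : Boundary n} (hξ : ξ ∈ limitSet B)
    (h : F n) : bAct h ξ ∈ limitSet (conjSub h B) := by
  obtain ⟨x, hxB, hx⟩ := mem_limitSet_iff.1 hξ
  exact mem_limitSet_iff.2 ⟨_, fun m => Subgroup.mem_map_of_mem _ (hxB m),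
    (hx.mul_left h).mul_right h⁻¹⟩

variable {r : ℕ} (A : Fin r → Subgroup (F n))

theorem dbAct_mem_dblBndA {z : Sym2 (Boundary n)} (hz : z ∈ dblBndA A) (h : F n) :
    dbAct h z ∈ dblBndA A := by
  obtain ⟨i, g, ξ, η, rfl, hξ, hη⟩ := hz
  refine ⟨i, h * g, bAct h ξ, bAct h η, rfl, ?_⟩
  rw [← conjSub_conjSub]
  exact ⟨bAct_mem_limitSet_conjSub hξ h, bAct_mem_limitSet_conjSub hη h⟩

theorem dbAct_mem_relSet {z : Sym2 (Boundary n)} (hz : z ∈ relSet A) (h : F n) :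
    dbAct h z ∈ relSet A :=
  ⟨fun hdiag => hz.1 ((Sym2.isDiag_map (bAct_injective h)).1 hdiag), fun hmem =>
    hz.2 (dbAct_inv_dbAct h z ▸ dbAct_mem_dblBndA A hmem h⁻¹)⟩

theorem coe_relAct (h : F n) (z : ↥(relSet A)) : (relAct A h z : Sym2 (Boundary n)) = dbAct h z :=
  congrArg Subtype.val (dif_pos (dbAct_mem_relSet A z.2 h))

instance : MulAction (F n) ↥(relSet A) where
  smul := relAct A
  one_smul z := Subtype.ext ((coe_relAct A 1 z).trans (dbAct_one _))
  mul_smul g h z := Subtype.ext <| by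
    change (relAct A (g * h) z).1 = (relAct A g (relAct A h z)).1
    rw [coe_relAct, coe_relAct, coe_relAct, dbAct_mul]

theorem orbitOf_coe (z : ↥(relSet A)) : orbitOf A z = MulAction.orbit (F n) z := by
  ext y
  refine exists_congr fun h => ?_
  rw [← coe_relAct, ← Subtype.ext_iff]
  exact eq_comm

end Action

/-! ### The pair of limits of an element -/

section Powers

variable {n : ℕ} {g : F n} {ξ η : Boundary n}

namespace IsPosLimit

theorem bAct_eq_of_commute (hξ : IsPosLimit g ξ) {h : F n} (hc : Commute h g) : bAct h ξ = ξ := by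
  rw [isPosLimit_iff_tendstoBoundary] at hξ
  have hconj := (hξ.mul_left h).mul_right h⁻¹
  simp only [← conj_pow, hc.eq, mul_inv_cancel_right] at hconj
  exact hconj.unique hξ

theorem exists_norm_pow_inv_mul_mk_bpre_le (hξ : IsPosLimit g ξ) {K m : ℕ}
    (hm : (K + 1) * g.norm < m) : ∃ k > K, ((g ^ k)⁻¹ * FreeGroup.mk (bpre ξ m)).norm ≤ g.norm := by
  obtain ⟨N, hN⟩ := hξ m
  have hpow : g ^ N ∈ Submonoid.closure {g} := pow_mem (Submonoid.mem_closure_singleton_self) N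
  obtain ⟨b, hb, hnear⟩ := exists_norm_inv_mul_mk_le_of_mem_closure (R := g.norm)
    (by rintro s rfl; exact le_rfl) hpow (hN N le_rfl)
  obtain ⟨k, rfl⟩ := Submonoid.mem_closure_singleton.1 hb
  refine ⟨k, ?_, hnear⟩
  have hlen : m ≤ (k + 1) * g.norm := by
    calc m = (g ^ k * ((g ^ k)⁻¹ * FreeGroup.mk (bpre ξ m))).norm := by
          rw [mul_inv_cancel_left, FreeGroup.norm, toWord_mk_bpre, length_bpre]
      _ ≤ k * g.norm + g.norm :=
          (FreeGroup.norm_mul_le _ _).trans (add_le_add (norm_pow_le g k) hnear)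
      _ = (k + 1) * g.norm := (Nat.succ_mul k _).symm
  exact Nat.lt_of_succ_lt_succ (Nat.lt_of_mul_lt_mul_right (hm.trans_le hlen))

theorem ne_of_inv (hξ : IsPosLimit g ξ) (hg : g ≠ 1) (hη : IsPosLimit g⁻¹ η) : ξ ≠ η := by
  rintro rfl
  obtain ⟨K, hK⟩ := eventually_atTop.1
    ((tendsto_norm_pow hg).eventually_gt_atTop (g⁻¹.norm + g.norm))
  obtain ⟨j, -, hj⟩ := hη.exists_norm_pow_inv_mul_mk_bpre_le (K := K)
    (by rw [FreeGroup.norm_inv_eq]; exact Nat.lt_succ_self _)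
  obtain ⟨k, hk, hnear⟩ := hξ.exists_norm_pow_inv_mul_mk_bpre_le (Nat.lt_succ_self ((K + 1) * _))
  have hmul : (g⁻¹ ^ j)⁻¹ * g ^ k = g ^ (j + k) := by rw [inv_pow, inv_inv, pow_add]
  have hle := norm_inv_mul_le_add hj hnear
  rw [hmul] at hle
  exact (hK (j + k) (hk.le.trans (Nat.le_add_left k j))).not_ge hle

theorem exists_pow_mem_of_mem_limitSet (hξ : IsPosLimit g ξ) {B : Subgroup (F n)} (hB : B.FG)
    (hmem : ξ ∈ limitSet B) : ∃ k ≠ 0, g ^ k ∈ B := by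
  obtain ⟨S, hS⟩ := (Subgroup.fg_iff_submonoid_fg B).1 hB
  have hSnorm : ∀ s ∈ (S : Set (F n)), s.norm ≤ S.sup FreeGroup.norm := fun s hs =>
    Finset.le_sup (f := FreeGroup.norm) hs
  refine exists_pow_mem_of_infinite (finite_setOf_norm_le (S.sup FreeGroup.norm + g.norm))
    (Set.infinite_of_forall_exists_gt fun K => ?_)
  obtain ⟨a, ha, hpre⟩ := hmem ((K + 1) * g.norm + 1)
  obtain ⟨b, hb, hbnear⟩ :=
    exists_norm_inv_mul_mk_le_of_mem_closure hSnorm (hS ▸ ha) hpre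
  rw [hS] at hb
  obtain ⟨k, hk, hknear⟩ := hξ.exists_norm_pow_inv_mul_mk_bpre_le (Nat.lt_succ_self _)
  refine ⟨k, ⟨b⁻¹ * g ^ k, norm_inv_mul_le_add hbnear hknear, ?_⟩, hk⟩
  rw [mul_inv_rev, inv_inv, mul_inv_cancel_left]
  exact hb

end IsPosLimit

theorem Malnormal.mem_of_pow_mem {B : Subgroup (F n)} (hB : Malnormal B) {k : ℕ} (hk : k ≠ 0)
    (hgk : g ^ k ∈ B) : g ∈ B := by
  by_contra hg
  have hconj : g ^ k ∈ conjSub g B := by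
    rwa [mem_conjSub, mul_assoc, ← pow_succ, pow_succ', inv_mul_cancel_left]
  have hone : g ^ k = 1 := Subgroup.mem_bot.1 (hB g hg ▸ Subgroup.mem_inf.2 ⟨hconj, hgk⟩)
  exact hg ((pow_eq_one_iff_left hk).1 hone ▸ one_mem B)

variable {r : ℕ} {A : Fin r → Subgroup (F n)}

theorem Peripheral.of_pow (hA : ∀ i, Malnormal (A i)) {k : ℕ} (hk : k ≠ 0)
    (hgk : Peripheral A (g ^ k)) : Peripheral A g := by
  obtain hone | ⟨_, ⟨i, h, rfl⟩, hmem⟩ := hgk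
  · exact Or.inl ((pow_eq_one_iff_left hk).1 hone)
  · refine Or.inr ⟨_, ⟨i, h, rfl⟩, mem_conjSub.2 ((hA i).mem_of_pow_mem hk ?_)⟩
    have hconj : (h⁻¹ * g * h) ^ k = h⁻¹ * g ^ k * h := by
      simpa only [inv_inv] using conj_pow (a := h⁻¹) (b := g) (i := k)
    rw [hconj]
    exact mem_conjSub.1 hmem

theorem mk_mem_relSet (hA : ∀ i, (A i).FG) (hg : ∀ k ≠ 0, ¬ Peripheral A (g ^ k))
    (hξ : IsPosLimit g ξ) (hη : IsPosLimit g⁻¹ η) : s(ξ, η) ∈ relSet A := by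
  have hg1 : g ≠ 1 := fun hone => hg 1 one_ne_zero (Or.inl (by rw [hone, pow_one]))
  refine ⟨fun hdiag => hξ.ne_of_inv hg1 hη (Sym2.mk_isDiag_iff.1 hdiag), ?_⟩
  rintro ⟨i, h, ξ', η', heq, hξ', hη'⟩
  have hmem : ξ ∈ limitSet (conjSub h (A i)) := by
    obtain rfl | rfl := Sym2.mem_iff.1 (heq ▸ Sym2.mem_mk_left ξ η) <;> assumption
  obtain ⟨k, hk, hgk⟩ := hξ.exists_pow_mem_of_mem_limitSet (fg_conjSub (hA i) h) hmem
  exact hg k hk (Or.inr ⟨_, ⟨i, h, rfl⟩, hgk⟩)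

end Powers

section Separation

variable {n : ℕ}

/-- The classes whose endpoints differ among their first `N` letters, i.e. the geodesics which
pass at distance less than `N` from `1`. -/
def separatedAt (N : ℕ) : Set (Sym2 (Boundary n)) :=
  {z | ¬ (z.map fun ξ => bpre ξ N).IsDiag}

theorem mk_mem_separatedAt {N : ℕ} {ξ η : Boundary n} :
    s(ξ, η) ∈ separatedAt N ↔ bpre ξ N ≠ bpre η N :=
  Sym2.mk_isDiag_iff.not

theorem exists_mem_separatedAt {z : Sym2 (Boundary n)} (hz : ¬ z.IsDiag) :
    ∃ N, z ∈ separatedAt N := by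
  induction z with
  | h ξ η =>
    simp only [mk_mem_separatedAt]
    by_contra! heq
    exact hz (Sym2.mk_isDiag_iff.2 (eq_of_forall_bpre_eq heq))

theorem dbAct_image_cylinder_subset (h w : F n) :
    dbAct h '' cylinder w ⊆ separatedAt (1 + h.norm) := by
  rintro _ ⟨_, ⟨ξ, η, rfl, hne, -⟩, rfl⟩
  refine mk_mem_separatedAt.2 fun heq => hne ?_
  rw [← FreeGroup.norm_inv_eq] at heq
  have hback := bpre_bAct_eq_of_bpre_eq heq
  simp only [← bAct_mul, inv_mul_cancel, bAct_one] at hback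
  exact bpre_eq_bpre_iff.1 hback 0 one_pos

theorem IsPosLimit.exists_norm_mul_zpow_lt {g : F n} {ξ η : Boundary n} (hξ : IsPosLimit g ξ)
    (hη : IsPosLimit g⁻¹ η) {h : F n} {N : ℕ} (hN : dbAct h s(ξ, η) ∈ separatedAt N) :
    ∃ k : ℤ, (h * g ^ k).norm < N + g.norm := by
  by_contra! hfar
  rw [isPosLimit_iff_tendstoBoundary] at hξ hη
  have hpos : bpre (bAct h ξ) N = h.toWord.take N := by
    have htake := (hξ.mul_left h).bpre_eq_take (N := N) (R := g.norm)
      (fun k => by rw [pow_succ, ← mul_assoc h, inv_mul_cancel_left])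
      (fun k => by rw [← zpow_natCast]; exact hfar k)
    rwa [pow_zero, mul_one] at htake
  have hneg : bpre (bAct h η) N = h.toWord.take N := by
    have htake := (hη.mul_left h).bpre_eq_take (N := N) (R := g.norm)
      (fun k => by rw [pow_succ, ← mul_assoc h, inv_mul_cancel_left, FreeGroup.norm_inv_eq])
      (fun k => by rw [inv_pow, ← zpow_natCast, ← zpow_neg]; exact hfar (-k))
    rwa [pow_zero, mul_one] at htake
  exact mk_mem_separatedAt.1 hN (hpos.trans hneg.symm)

theorem IsPosLimit.finite_range_dbAct_inter_separatedAt {g : F n} {ξ η : Boundary n}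
    (hξ : IsPosLimit g ξ) (hη : IsPosLimit g⁻¹ η) (N : ℕ) :
    (Set.range (fun h => dbAct h s(ξ, η)) ∩ separatedAt N).Finite := by
  refine ((finite_setOf_norm_le (N + g.norm)).image fun h => dbAct h s(ξ, η)).subset ?_
  rintro _ ⟨⟨h, rfl⟩, hN⟩
  obtain ⟨k, hk⟩ := hξ.exists_norm_mul_zpow_lt hη hN
  have hfix : dbAct (g ^ k) s(ξ, η) = s(ξ, η) :=
    congrArg₂ (fun ξ η => s(ξ, η))
      (hξ.bAct_eq_of_commute ((Commute.refl g).zpow_left k))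
      (hη.bAct_eq_of_commute ((Commute.refl g).zpow_left k).inv_right)
  exact ⟨h * g ^ k, hk.le, by simp only [dbAct_mul, hfix]⟩

end Separation

/-! ### Counting measures of locally finite sets -/

section CountingMeasure

theorem exists_finite_subset_lt_encard {α : Type*} {s : Set α} {a : ENNReal}
    (ha : a < (s.encard : ENNReal)) : ∃ t ⊆ s, t.Finite ∧ a < (t.encard : ENNReal) := by
  by_cases hs : s.Finite
  · exact ⟨s, subset_rfl, hs, ha⟩
  · obtain ⟨k, hk⟩ := ENNReal.exists_nat_gt ha.ne_top
    obtain ⟨t, hts, hcard⟩ := Set.Infinite.exists_subset_card_eq hs k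
    refine ⟨t, hts, t.finite_toSet, ?_⟩
    rwa [Set.encard_coe_eq_coe_finsetCard, hcard, ENat.toENNReal_coe]

variable {X : Type*} [TopologicalSpace X] [T1Space X] {O : Set X}

theorem isClosed_of_subset_of_locallyFinite (hO : LocallyFinite fun x : O => ({(x : X)} : Set X))
    {D : Set X} (hD : D ⊆ O) : IsClosed D := by
  have hfin : LocallyFinite fun x : D => ({(x : X)} : Set X) :=
    hO.comp_injective (Set.inclusion_injective hD)
  have hunion := hfin.isClosed_iUnion fun x => isClosed_singleton
  rwa [Set.iUnion_of_singleton_coe] at hunion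

variable [MeasurableSpace X]

section

variable [OpensMeasurableSpace X]

theorem count_restrict_apply_of_locallyFinite
    (hO : LocallyFinite fun x : O => ({(x : X)} : Set X)) (s : Set X) :
    Measure.count.restrict O s = ((s ∩ O).encard : ENNReal) := by
  rw [Measure.restrict_apply' (isClosed_of_subset_of_locallyFinite hO subset_rfl).measurableSet,
    Measure.count_apply
      (isClosed_of_subset_of_locallyFinite hO Set.inter_subset_right).measurableSet]

theorem smulInvariantMeasure_count_restrict_orbit {G : Type*} [Group G] [MulAction G X] {x : X}
    (hO : LocallyFinite fun y : MulAction.orbit G x => ({(y : X)} : Set X)) :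
    SMulInvariantMeasure G X (Measure.count.restrict (MulAction.orbit G x)) where
  measure_preimage_smul g s _ := by
    rw [count_restrict_apply_of_locallyFinite hO, count_restrict_apply_of_locallyFinite hO,
      ← Set.encard_preimage_of_bijective (MulAction.bijective g) (s ∩ _), Set.preimage_inter,
      Set.preimage_smul g (MulAction.orbit G x), MulAction.smul_orbit]

end

theorem regular_count_restrict_of_locallyFinite [BorelSpace X]
    (hO : LocallyFinite fun x : O => ({(x : X)} : Set X)) :
    (Measure.count.restrict O).Regular where
  lt_top_of_isCompact K hK := by
    have hfin : (K ∩ O).Finite := by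
      refine ((hO.finite_nonempty_inter_compact hK).image Subtype.val).subset ?_
      exact fun x hx => ⟨⟨x, hx.2⟩, ⟨x, rfl, hx.1⟩, rfl⟩
    rw [count_restrict_apply_of_locallyFinite hO]
    exact ENat.toENNReal_lt_top.2 hfin.encard_lt_top
  outerRegular s _ a ha := by
    refine ⟨(O \ s)ᶜ, fun x hx hxO => hxO.2 hx,
      (isClosed_of_subset_of_locallyFinite hO Set.sdiff_subset).isOpen_compl, ?_⟩
    have hinter : (O \ s)ᶜ ∩ O = s ∩ O := by
      ext x
      by_cases hx : x ∈ O <;> simp [hx]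
    rwa [count_restrict_apply_of_locallyFinite hO, hinter,
      ← count_restrict_apply_of_locallyFinite hO]
  innerRegular := by
    intro U _ a ha
    rw [count_restrict_apply_of_locallyFinite hO] at ha
    obtain ⟨t, htU, ht, hat⟩ := exists_finite_subset_lt_encard ha
    refine ⟨t, htU.trans Set.inter_subset_left, ht.isCompact, ?_⟩
    rwa [count_restrict_apply_of_locallyFinite hO,
      Set.inter_eq_left.2 (htU.trans Set.inter_subset_right)]

end CountingMeasure

/-! ### The current of an orbit -/

section DoubleBoundary

variable {n r : ℕ}

instance : T2Space (Boundary n) :=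
  inferInstanceAs (T2Space {ξ : ℕ → Letter n // IsRed ξ})

instance {X : Type*} [TopologicalSpace X] [T1Space X] : T1Space (Sym2 X) where
  t1 z := by
    induction z with
    | h x y =>
      refine isQuotientMap_quot_mk.isClosed_preimage.1 (Set.Finite.isClosed ?_)
      refine (Set.toFinite {(x, y), (y, x)}).subset fun p hp => ?_
      exact Sym2.eq_iff.1 hp |>.imp (fun h => Prod.ext h.1 h.2) (fun h => Prod.ext h.1 h.2)

instance : BorelSpace (Sym2 (Boundary n)) := ⟨rfl⟩

theorem isOpen_separatedAt (N : ℕ) : IsOpen (separatedAt (n := n) N) := by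
  refine isQuotientMap_quot_mk.isOpen_preimage.1 ?_
  have hunion : (fun p : Boundary n × Boundary n => s(p.1, p.2)) ⁻¹' separatedAt N =
      ⋃ i ∈ Set.Iio N, {p | p.1.1 i ≠ p.2.1 i} := by
    ext p
    simp [mk_mem_separatedAt, bpre_eq_bpre_iff]
  have hletter (i : ℕ) : Continuous fun ξ : Boundary n => ξ.1 i :=
    (continuous_apply i).comp continuous_subtype_val
  exact hunion ▸ isOpen_biUnion fun i _ =>
    isOpen_ne_fun ((hletter i).comp continuous_fst) ((hletter i).comp continuous_snd)

theorem IsPosLimit.finite_orbitOf_inter_separatedAt (A : Fin r → Subgroup (F n)) {g : F n}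
    {ξ η : Boundary n} (hξ : IsPosLimit g ξ) (hη : IsPosLimit g⁻¹ η) (N : ℕ) :
    (orbitOf A s(ξ, η) ∩ Subtype.val ⁻¹' separatedAt N).Finite := by
  refine ((hξ.finite_range_dbAct_inter_separatedAt hη N).preimage
    Subtype.val_injective.injOn).subset ?_
  rintro y ⟨⟨h, hy⟩, hN⟩
  exact ⟨⟨h, hy.symm⟩, hN⟩

theorem locallyFinite_of_finite_inter_separatedAt {A : Fin r → Subgroup (F n)}
    {O : Set ↥(relSet A)} (hfin : ∀ N, (O ∩ Subtype.val ⁻¹' separatedAt N).Finite) :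
    LocallyFinite fun y : O => ({(y : ↥(relSet A))} : Set ↥(relSet A)) := by
  intro x
  obtain ⟨N, hN⟩ := exists_mem_separatedAt x.2.1
  refine ⟨Subtype.val ⁻¹' separatedAt N,
    ((isOpen_separatedAt N).preimage continuous_subtype_val).mem_nhds hN, ?_⟩
  refine ((hfin N).preimage Subtype.val_injective.injOn).subset ?_
  rintro y ⟨_, rfl, hy⟩
  exact ⟨y.2, hy⟩

theorem isRelCurrent_count_restrict_orbitOf {A : Fin r → Subgroup (F n)}
    {z : Sym2 (Boundary n)} (hz : z ∈ relSet A)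
    (hfin : ∀ N, (orbitOf A z ∩ Subtype.val ⁻¹' separatedAt N).Finite) :
    IsRelCurrent A (Measure.count.restrict (orbitOf A z)) := by
  have hO := locallyFinite_of_finite_inter_separatedAt hfin
  refine ⟨fun g s hs => ?_, regular_count_restrict_of_locallyFinite hO⟩
  rw [show orbitOf A z = MulAction.orbit (F n) (⟨z, hz⟩ : ↥(relSet A)) from
    orbitOf_coe A ⟨z, hz⟩] at hO ⊢
  exact (smulInvariantMeasure_count_restrict_orbit hO).measure_preimage_smul g hs

end DoubleBoundary

theorem statement_15_general (n r : ℕ) (A : Fin r → Subgroup (F n)) (hfg : ∀ i, (A i).FG)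
    (g : F n) (hg : ∀ k ≠ 0, ¬ Peripheral A (g ^ k)) :
    ∃ ξ η : Boundary n, IsPosLimit g ξ ∧ IsPosLimit g⁻¹ η ∧ ξ ≠ η ∧
      s(ξ, η) ∈ relSet A ∧
      (∀ w g' : F n, (orbitOf A s(ξ, η) ∩ relCylG A g' w).Finite) ∧
      IsRelCurrent A (Measure.count.restrict (orbitOf A s(ξ, η))) := by
  have hg1 : g ≠ 1 := fun h => hg 1 one_ne_zero (.inl (by rw [h, one_pow]))
  obtain ⟨ξ, hξ⟩ := exists_isPosLimit hg1
  obtain ⟨η, hη⟩ := exists_isPosLimit (inv_ne_one.2 hg1)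
  have hrel : s(ξ, η) ∈ relSet A := mk_mem_relSet hfg hg hξ hη
  have hfin := hξ.finite_orbitOf_inter_separatedAt A hη
  refine ⟨ξ, η, hξ, hη, hξ.ne_of_inv hg1 hη, hrel, fun w g' => ?_,
    isRelCurrent_count_restrict_orbitOf hrel hfin⟩
  exact (hfin (1 + g'.norm)).subset
    (Set.inter_subset_inter_right _ (Set.preimage_mono (dbAct_image_cylinder_subset g' w)))

/-- The pair {g^{+∞}, g^{−∞}} of a nonperipheral, root-free element gives a point of
∂²(F_n,𝒜) whose orbit meets every translated cylinder finitely, and the counting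
measure on its orbit is a relative current. -/
theorem statement_15 (n r L : ℕ) (hn : 3 ≤ n) (A : Fin r → Subgroup (F n))
    (hsys : IsSystem A) (hmal : SystemMalnormal A) (hL : 1 ≤ L)
    (hdiam : DiamBound A L) (hbase : ∀ i, (1 : F n) ∈ treeVerts (A i))
    (g : F n) (hg : ¬ Peripheral A g) (hpp : ¬ IsProperPower g) :
    ∃ ξ η : Boundary n, IsPosLimit g ξ ∧ IsPosLimit g⁻¹ η ∧ ξ ≠ η ∧
      s(ξ, η) ∈ relSet A ∧
      (∀ w ∈ FmA A L, ∀ g' : F n, (orbitOf A s(ξ, η) ∩ relCylG A g' w).Finite) ∧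
      IsRelCurrent A (Measure.count.restrict (orbitOf A s(ξ, η))) := by
  obtain ⟨ξ, η, hξ, hη, hne, hrel, hcyl, hcur⟩ := statement_15_general n r A hsys.1 g
    fun k hk hgk => hg (Peripheral.of_pow hmal.1 hk hgk)
  exact ⟨ξ, η, hξ, hη, hne, hrel, fun w _ g' => hcyl w g', hcur⟩

end RelCurr
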